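/- The Jacobi theta constant θ(τ) = Σ_{n∈ℤ} e^{πin²τ} satisfies the third-order nonlinear ODE of Jacobi: for every τ ∈ ℍ, (θ²θ_{τττ} − 15θθ_τθ_{ττ} + 30θ_τ³)² + 32(θθ_{ττ} − 3θ_τ²)³ + π²θ¹⁰(θθ_{ττ} − 3θ_τ²)² = 0, where subscripts denote ordinary derivatives with respect to τ. -/

import Mathlib

open Complex

noncomputable section

/-- The Jacobi theta constant `θ(τ) = Σ_{n∈ℤ} e^{πin²τ}`. -/
def θ : ℂ → ℂ := fun τ => ∑' n : ℤ, Complex.exp (Real.pi * Complex.I * (n : ℂ) ^ 2 * τ)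

/-- The polynomial of Jacobi's differential equation. -/
def EE (a b c d : ℂ) : ℂ :=
  (a ^ 2 * d - 15 * a * b * c + 30 * b ^ 3) ^ 2 + 32 * (a * c - 3 * b ^ 2) ^ 3 +
    (Real.pi : ℂ) ^ 2 * a ^ 10 * (a * c - 3 * b ^ 2) ^ 2

/-- Jacobi's differential expression. -/
def EF (f : ℂ → ℂ) (z : ℂ) : ℂ :=
  EE (f z) (deriv f z) (deriv (deriv f) z) (deriv (deriv (deriv f)) z)

/-- The open upper half plane. -/
def HH : Set ℂ := {z | 0 < z.im}

lemma isOpen_HH : IsOpen HH := isOpen_lt continuous_const continuous_im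

lemma EF_of_hasDerivAt {U : Set ℂ} (hU : IsOpen U) {f F1 F2 F3 : ℂ → ℂ}
    (h1 : ∀ z ∈ U, HasDerivAt f (F1 z) z) (h2 : ∀ z ∈ U, HasDerivAt F1 (F2 z) z)
    (h3 : ∀ z ∈ U, HasDerivAt F2 (F3 z) z) {z : ℂ} (hz : z ∈ U) :
    EF f z = EE (f z) (F1 z) (F2 z) (F3 z) := by
  have e1 : ∀ z ∈ U, deriv f z = F1 z := fun z hz => (h1 z hz).deriv
  have e2 : ∀ z ∈ U, deriv (deriv f) z = F2 z := fun z hz => by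
    have : deriv f =ᶠ[nhds z] F1 := Filter.eventuallyEq_of_mem (hU.mem_nhds hz) e1
    rw [this.deriv_eq, (h2 z hz).deriv]
  have e3 : ∀ z ∈ U, deriv (deriv (deriv f)) z = F3 z := fun z hz => by
    have : deriv (deriv f) =ᶠ[nhds z] F2 := Filter.eventuallyEq_of_mem (hU.mem_nhds hz) e2
    rw [this.deriv_eq, (h3 z hz).deriv]
  rw [EF, e1 z hz, e2 z hz, e3 z hz]

lemma hasDerivAt_of_diffOn {U : Set ℂ} (hU : IsOpen U) {f : ℂ → ℂ}
    (hf : DifferentiableOn ℂ f U) :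
    (∀ z ∈ U, HasDerivAt f (deriv f z) z) ∧
    (∀ z ∈ U, HasDerivAt (deriv f) (deriv (deriv f) z) z) ∧
    (∀ z ∈ U, HasDerivAt (deriv (deriv f)) (deriv (deriv (deriv f)) z) z) := by
  have h1 := hf.deriv hU
  have h2 := h1.deriv hU
  exact ⟨fun z hz => (hf.differentiableAt (hU.mem_nhds hz)).hasDerivAt,
    fun z hz => (h1.differentiableAt (hU.mem_nhds hz)).hasDerivAt,
    fun z hz => (h2.differentiableAt (hU.mem_nhds hz)).hasDerivAt⟩

lemma HH_ne_zero {z : ℂ} (hz : z ∈ HH) : z ≠ 0 := by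
  rintro rfl; simp [HH] at hz

lemma HH_neg_inv {z : ℂ} (hz : z ∈ HH) : -z⁻¹ ∈ HH := by
  have h0 := HH_ne_zero hz
  have hz : 0 < z.im := hz
  show 0 < (-z⁻¹).im
  rw [neg_im, inv_im, neg_div, neg_neg]
  exact div_pos hz (normSq_pos.2 h0)

/-- `EF` under the inversion. -/
lemma EF_inv {f g s : ℂ → ℂ} (hg : DifferentiableOn ℂ g HH)
    (hs : ∀ z ∈ HH, HasDerivAt s (-(1 / 2) * s z * z⁻¹) z)
    (hs8 : ∀ z ∈ HH, s z ^ 8 = z⁻¹ ^ 4)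
    (hf : ∀ z ∈ HH, f z = s z * g (-z⁻¹)) {z : ℂ} (hz : z ∈ HH) :
    EF f z = s z ^ 6 * z⁻¹ ^ 12 * EF g (-z⁻¹) := by
  obtain ⟨g1, g2, g3⟩ := hasDerivAt_of_diffOn isOpen_HH hg
  have hi : ∀ z ∈ HH, HasDerivAt (fun z : ℂ => z⁻¹) (-z⁻¹ ^ 2) z := fun z hz => by
    simpa using hasDerivAt_inv (HH_ne_zero hz)
  have hc : ∀ {k k' : ℂ → ℂ}, (∀ z ∈ HH, HasDerivAt k (k' z) z) →
      ∀ z ∈ HH, HasDerivAt (fun z => k (-z⁻¹)) (k' (-z⁻¹) * z⁻¹ ^ 2) z := fun h z hz => by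
    have := (h _ (HH_neg_inv hz)).comp z (hi z hz).neg
    simpa using! this
  have G1 := hc g1
  have G2 := hc g2
  have G3 := hc g3
  rw [EF_of_hasDerivAt isOpen_HH (f := f)
    (F1 := fun z => s z * (-(1 / 2) * z⁻¹ * g (-z⁻¹) + z⁻¹ ^ 2 * deriv g (-z⁻¹)))
    (F2 := fun z => s z * (3 / 4 * z⁻¹ ^ 2 * g (-z⁻¹) - 3 * z⁻¹ ^ 3 * deriv g (-z⁻¹)
      + z⁻¹ ^ 4 * deriv (deriv g) (-z⁻¹)))
    (F3 := fun z => s z * (-(15 / 8) * z⁻¹ ^ 3 * g (-z⁻¹) + 45 / 4 * z⁻¹ ^ 4 * deriv g (-z⁻¹)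
      - 15 / 2 * z⁻¹ ^ 5 * deriv (deriv g) (-z⁻¹)
      + z⁻¹ ^ 6 * deriv (deriv (deriv g)) (-z⁻¹))) ?_ ?_ ?_ hz]
  · rw [EF, EE, EE, hf z hz]
    have h8 := hs8 z hz
    generalize s z = s at *
    generalize z⁻¹ = w at *
    linear_combination (Real.pi : ℂ) ^ 2 * s ^ 6 * w ^ 8 * (g (-w)) ^ 10 *
      (g (-w) * deriv (deriv g) (-w) - 3 * deriv g (-w) ^ 2) ^ 2 * h8
  · intro z hz
    have h := (hs z hz).mul (G1 z hz)
    refine (h.congr_of_eventuallyEq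
      (Filter.eventuallyEq_of_mem (isOpen_HH.mem_nhds hz) hf)).congr_deriv ?_
    ring
  · intro z hz
    have h := (hs z hz).mul ((((hi z hz).const_mul (-(1 / 2))).mul (G1 z hz)).add
      (((hi z hz).pow 2).mul (G2 z hz)))
    refine h.congr_deriv ?_
    simp
    ring
  · intro z hz
    have h := (hs z hz).mul ((((((hi z hz).pow 2).const_mul (3 / 4)).mul (G1 z hz)).sub
      ((((hi z hz).pow 3).const_mul 3).mul (G2 z hz))).add
      (((hi z hz).pow 4).mul (G3 z hz)))
    refine h.congr_deriv ?_
    simp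
    ring

lemma EF_comp_add (f : ℂ → ℂ) (a z : ℂ) : EF (fun w => f (w + a)) z = EF f (z + a) := by
  have h : ∀ f : ℂ → ℂ, deriv (fun w => f (w + a)) = fun w => deriv f (w + a) := fun f => by
    ext w; exact deriv_comp_add_const f a w
  simp only [EF, h]

lemma EF_const_mul (f : ℂ → ℂ) (a z : ℂ) (ha : a ^ 8 = 1) :
    EF (fun w => a * f w) z = a ^ 6 * EF f z := by
  have h : ∀ f : ℂ → ℂ, deriv (fun w => a * f w) = fun w => a * deriv f w := fun f => by
    ext w; exact deriv_const_mul_field a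
  simp only [EF, h, EE]
  linear_combination (Real.pi : ℂ) ^ 2 * a ^ 6 * (f z) ^ 10 *
      (f z * deriv (deriv f) z - 3 * deriv f z ^ 2) ^ 2 * ha

lemma exp_mem_ball {c z : ℂ} (h : (c * z).re < 0) : exp (c * z) ∈ Metric.ball (0 : ℂ) 1 := by
  rw [mem_ball_zero_iff, norm_exp]
  exact Real.exp_lt_one_iff.2 h

/-- `EF` of a function of `q = exp (c z)` times an exponential `exp (b z)`. -/
lemma EF_qexp {f F : ℂ → ℂ} (b c : ℂ) (hc : ∀ z ∈ HH, (c * z).re < 0)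
    (hF : DifferentiableOn ℂ F (Metric.ball 0 1))
    (hf : ∀ z ∈ HH, f z = exp (b * z) * F (exp (c * z))) {z : ℂ} (hz : z ∈ HH) (q e : ℂ)
    (hq : q = exp (c * z)) (he : e = exp (b * z)) :
    EF f z = EE (e * F q) (e * (b * F q + c * q * deriv F q))
      (e * (b ^ 2 * F q + (2 * b * c + c ^ 2) * q * deriv F q + c ^ 2 * q ^ 2 * deriv (deriv F) q))
      (e * (b ^ 3 * F q + (3 * b ^ 2 * c + 3 * b * c ^ 2 + c ^ 3) * q * deriv F q
        + (3 * b * c ^ 2 + 3 * c ^ 3) * q ^ 2 * deriv (deriv F) q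
        + c ^ 3 * q ^ 3 * deriv (deriv (deriv F)) q)) := by
  obtain ⟨g1, g2, g3⟩ := hasDerivAt_of_diffOn Metric.isOpen_ball hF
  have hE : ∀ (a z : ℂ), HasDerivAt (fun z => exp (a * z)) (a * exp (a * z)) z := fun a z => by
    simpa [mul_comm] using ((hasDerivAt_id z).const_mul a).cexp
  have hC : ∀ {k k' : ℂ → ℂ}, (∀ z ∈ Metric.ball (0 : ℂ) 1, HasDerivAt k (k' z) z) →
      ∀ z ∈ HH, HasDerivAt (fun z => k (exp (c * z))) (k' (exp (c * z)) * (c * exp (c * z))) z :=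
    fun h z hz => (h _ (exp_mem_ball (hc z hz))).comp z (hE c z)
  have G1 := hC g1
  have G2 := hC g2
  have G3 := hC g3
  subst hq he
  rw [EF_of_hasDerivAt isOpen_HH (f := f)
    (F1 := fun z => exp (b * z) * (b * F (exp (c * z)) + c * exp (c * z) * deriv F (exp (c * z))))
    (F2 := fun z => exp (b * z) * (b ^ 2 * F (exp (c * z)) +
      (2 * b * c + c ^ 2) * exp (c * z) * deriv F (exp (c * z))
      + c ^ 2 * exp (c * z) ^ 2 * deriv (deriv F) (exp (c * z))))
    (F3 := fun z => exp (b * z) * (b ^ 3 * F (exp (c * z))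
      + (3 * b ^ 2 * c + 3 * b * c ^ 2 + c ^ 3) * exp (c * z) * deriv F (exp (c * z))
      + (3 * b * c ^ 2 + 3 * c ^ 3) * exp (c * z) ^ 2 * deriv (deriv F) (exp (c * z))
      + c ^ 3 * exp (c * z) ^ 3 * deriv (deriv (deriv F)) (exp (c * z)))) ?_ ?_ ?_ hz, hf z hz]
  · intro z hz
    have h := (hE b z).mul (G1 z hz)
    refine (h.congr_of_eventuallyEq
      (Filter.eventuallyEq_of_mem (isOpen_HH.mem_nhds hz) hf)).congr_deriv ?_
    ring
  · intro z hz
    have h := (hE b z).mul (((G1 z hz).const_mul b).add (((hE c z).const_mul c).mul (G2 z hz)))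
    refine h.congr_deriv ?_
    simp only [Pi.add_apply, Pi.mul_apply]
    ring
  · intro z hz
    have h := (hE b z).mul ((((G1 z hz).const_mul (b ^ 2)).add
      (((hE c z).const_mul (2 * b * c + c ^ 2)).mul (G2 z hz))).add
      ((((hE c z).pow 2).const_mul (c ^ 2)).mul (G3 z hz)))
    refine h.congr_deriv ?_
    simp
    ring

/-- A lacunary series. -/
def lac (a : ℕ → ℕ) (q : ℂ) : ℂ := ∑' n : ℕ, q ^ a n

lemma lac_diff {a : ℕ → ℕ} (ha : ∀ n, n ≤ a n) :
    DifferentiableOn ℂ (lac a) (Metric.ball 0 1) := by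
  intro q hq
  rw [mem_ball_zero_iff] at hq
  obtain ⟨r, hr, hr1⟩ := exists_between hq
  have hr0 : 0 ≤ r := (norm_nonneg _).trans hr.le
  have h := differentiableOn_tsum_of_summable_norm (F := fun (n : ℕ) (q : ℂ) => q ^ a n)
    (U := Metric.ball 0 r) (summable_geometric_of_lt_one hr0 hr1)
    (fun n => by fun_prop) Metric.isOpen_ball (fun n w hw => by
      rw [mem_ball_zero_iff] at hw
      rw [norm_pow]
      exact (pow_le_pow_left₀ (norm_nonneg _) hw.le _).trans
        (pow_le_pow_of_le_one hr0 hr1.le (ha n)))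
  exact (h.differentiableAt (Metric.isOpen_ball.mem_nhds
    (mem_ball_zero_iff.2 hr))).differentiableWithinAt

lemma lac_zero {a : ℕ → ℕ} (ha : ∀ n, n ≤ a n) (h0 : a 0 = 0) : lac a 0 = 1 := by
  rw [lac, tsum_eq_single 0]
  · simp [h0]
  · intro n hn
    have := ha n
    exact zero_pow (by omega)

/-- The `q`-series of `θ`. -/
def Th (q : ℂ) : ℂ := 1 + 2 * (q * lac (fun n => n ^ 2 + 2 * n) q)

lemma Th_diff : DifferentiableOn ℂ Th (Metric.ball 0 1) := by
  have := lac_diff (a := fun n => n ^ 2 + 2 * n) (fun n => by nlinarith)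
  unfold Th
  fun_prop

lemma Th_zero : Th 0 = 1 := by simp [Th]

lemma Th_deriv_zero : deriv Th 0 = 2 := by
  have h := lac_diff (a := fun n => n ^ 2 + 2 * n) (fun n => by nlinarith)
  have h1 := (h.differentiableAt (Metric.isOpen_ball.mem_nhds
    (Metric.mem_ball_self one_pos))).hasDerivAt
  have h2 : HasDerivAt Th (2 * (1 * lac (fun n => n ^ 2 + 2 * n) 0 +
      0 * deriv (lac (fun n => n ^ 2 + 2 * n)) 0)) 0 :=
    (((hasDerivAt_id (0 : ℂ)).mul h1).const_mul 2).const_add 1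
  rw [h2.deriv, lac_zero (fun n => by nlinarith) (by simp)]
  simp

lemma theta_eq_jacobiTheta : θ = jacobiTheta := rfl

lemma theta_eq {z : ℂ} (hz : z ∈ HH) : θ z = Th (exp (Real.pi * I * z)) := by
  rw [theta_eq_jacobiTheta, jacobiTheta_eq_tsum_nat hz, Th, lac]
  have : ∀ n : ℕ, exp (Real.pi * I * ((n : ℂ) + 1) ^ 2 * z) =
      exp (Real.pi * I * z) * exp (Real.pi * I * z) ^ (n ^ 2 + 2 * n) := fun n => by
    rw [← pow_succ', ← exp_nat_mul]
    congr 1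
    push_cast
    ring
  simp only [this]
  rw [tsum_mul_left]

lemma theta_diff : DifferentiableOn ℂ θ HH := fun z hz =>
  (differentiableAt_jacobiTheta hz).differentiableWithinAt

/-- The function `θ₄`. -/
def th4 (z : ℂ) : ℂ := θ (z + 1)

lemma HH_add_one {z : ℂ} (hz : z ∈ HH) : z + 1 ∈ HH := by
  simpa [HH] using hz

lemma th4_diff : DifferentiableOn ℂ th4 HH :=
  theta_diff.comp (by fun_prop) (fun _ hz => HH_add_one hz)

/-- The power series of `θ₂`. -/
def Ps (w : ℂ) : ℂ := 2 * lac (fun n => n * (n + 1) / 2) w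

lemma tri_ge (n : ℕ) : n ≤ n * (n + 1) / 2 := by
  rcases n with _ | n
  · simp
  · rw [Nat.le_div_iff_mul_le two_pos]; nlinarith

lemma Ps_diff : DifferentiableOn ℂ Ps (Metric.ball 0 1) := by
  have := lac_diff tri_ge
  unfold Ps
  fun_prop

/-- The function `θ₂`. -/
def th2 (z : ℂ) : ℂ := exp (Real.pi * I / 4 * z) * Ps (exp (2 * Real.pi * I * z))

lemma re_pi {z : ℂ} (hz : z ∈ HH) : (Real.pi * I * z).re < 0 := by
  have hz : 0 < z.im := hz
  simp; positivity

lemma re_two_pi {z : ℂ} (hz : z ∈ HH) : (2 * Real.pi * I * z).re < 0 := by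
  have hz : 0 < z.im := hz
  simp; positivity

lemma th2_diff : DifferentiableOn ℂ th2 HH := by
  unfold th2
  refine DifferentiableOn.mul (by fun_prop) ?_
  exact DifferentiableOn.comp (g := Ps) (f := fun z => exp (2 * Real.pi * I * z)) (t := Metric.ball 0 1) Ps_diff (by fun_prop) (fun z hz => exp_mem_ball (re_two_pi hz))

lemma th2_eq {z : ℂ} (hz : z ∈ HH) :
    th2 z = exp (Real.pi * I / 4 * z) * jacobiTheta₂ (z / 2) z := by
  rw [th2]
  congr 1
  have h := hasSum_jacobiTheta₂_term (z / 2) hz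
  have h2 := h.nat_add_neg_add_one
  rw [← h2.tsum_eq, Ps, lac, ← tsum_mul_left]
  refine tsum_congr fun n => ?_
  rw [jacobiTheta₂_term, jacobiTheta₂_term, ← exp_nat_mul, two_mul]
  have h3 : ((n * (n + 1) / 2 : ℕ) : ℂ) = n * (n + 1) / 2 := by
    rw [Nat.cast_div (Nat.even_mul_succ_self n).two_dvd (by norm_num)]
    push_cast; ring
  rw [h3]
  congr 2 <;> · push_cast; ring

lemma th4_eq (z : ℂ) : th4 z = jacobiTheta₂ (1 / 2) z := by
  unfold th4 θ jacobiTheta₂ jacobiTheta₂_term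
  refine tsum_congr fun n => ?_
  rw [exp_eq_exp_iff_exists_int]
  obtain ⟨k, hk⟩ := Int.even_mul_pred_self n
  refine ⟨k, ?_⟩
  have : (n : ℂ) * (n - 1) = k + k := by exact_mod_cast hk
  linear_combination (Real.pi * I : ℂ) * this

/-- The automorphy factor of weight `-1/2`. -/
def aut (z : ℂ) : ℂ := 1 / (-I * z) ^ (1 / 2 : ℂ)

lemma slit {z : ℂ} (hz : z ∈ HH) : -I * z ∈ slitPlane := by
  left; simpa using! hz

lemma aut_sq {z : ℂ} (hz : z ∈ HH) : aut z ^ 2 = I * z⁻¹ := by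
  have h0 := HH_ne_zero hz
  rw [aut, div_pow, ← cpow_nat_mul]
  simp [mul_comm]

lemma aut_eight {z : ℂ} (hz : z ∈ HH) : aut z ^ 8 = z⁻¹ ^ 4 := by
  rw [show aut z ^ 8 = (aut z ^ 2) ^ 4 by ring, aut_sq hz, mul_pow, I_pow_four, one_mul]

lemma aut_deriv : ∀ z ∈ HH, HasDerivAt aut (-(1 / 2) * aut z * z⁻¹) z := by
  intro z hz
  have h0 := HH_ne_zero hz
  have h1 : -I * z ≠ 0 := slitPlane_ne_zero (slit hz)
  have h := ((hasDerivAt_id z).const_mul (-I)).cpow_const (c := -(1 / 2 : ℂ)) (slit hz)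
  have e : aut = fun z => (-I * z) ^ (-(1 / 2) : ℂ) := by
    ext w; rw [aut, cpow_neg, one_div]
  rw [e]
  refine HasDerivAt.congr_deriv (f' := _) h ?_
  simp only [id]
  rw [cpow_sub _ _ h1, cpow_one]
  field_simp

lemma theta_inv : ∀ z ∈ HH, θ z = aut z * θ (-z⁻¹) := by
  intro z hz
  rw [theta_eq_jacobiTheta, jacobiTheta_eq_jacobiTheta₂, jacobiTheta_eq_jacobiTheta₂,
    jacobiTheta₂_functional_equation, aut]
  simp [neg_div]

lemma th4_inv : ∀ z ∈ HH, th4 z = aut z * th2 (-z⁻¹) := by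
  intro z hz
  have h0 := HH_ne_zero hz
  rw [th4_eq, th2_eq (HH_neg_inv hz), jacobiTheta₂_functional_equation, aut, mul_assoc,
    ← jacobiTheta₂_neg_left]
  congr 2
  · congr 1
    field_simp
    norm_num
  · congr 1 <;> field_simp

lemma E8_theta {z : ℂ} (hz : z ∈ HH) : EF θ z ^ 8 = z⁻¹ ^ 120 * EF θ (-z⁻¹) ^ 8 := by
  rw [EF_inv theta_diff aut_deriv (fun z => aut_eight) theta_inv hz]
  have := aut_eight hz
  calc _ = (aut z ^ 8) ^ 6 * z⁻¹ ^ 96 * EF θ (-z⁻¹) ^ 8 := by ring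
    _ = _ := by rw [this]; ring

lemma E8_th4 {z : ℂ} (hz : z ∈ HH) : EF th4 z ^ 8 = z⁻¹ ^ 120 * EF th2 (-z⁻¹) ^ 8 := by
  rw [EF_inv th2_diff aut_deriv (fun z => aut_eight) th4_inv hz]
  have := aut_eight hz
  calc _ = (aut z ^ 8) ^ 6 * z⁻¹ ^ 96 * EF th2 (-z⁻¹) ^ 8 := by ring
    _ = _ := by rw [this]; ring

lemma E8_th2 {z : ℂ} (hz : z ∈ HH) : EF th2 z ^ 8 = z⁻¹ ^ 120 * EF th4 (-z⁻¹) ^ 8 := by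
  have h0 := HH_ne_zero hz
  have h := E8_th4 (HH_neg_inv hz)
  rw [h]
  have e : -(-z⁻¹)⁻¹ = z := by rw [inv_neg, inv_inv, neg_neg]
  rw [e]
  simp only [inv_neg, inv_inv]
  field_simp

lemma EF_th4 (z : ℂ) : EF th4 z = EF θ (z + 1) := EF_comp_add θ 1 z

lemma EF_th4_add (z : ℂ) : EF th4 (z + 1) = EF θ z := by
  rw [← EF_comp_add]
  congr 1
  ext w
  rw [th4, theta_eq_jacobiTheta, ← jacobiTheta_two_add w]
  congr 1; ring

lemma EF_th2_add (z : ℂ) : EF th2 (z + 1) ^ 8 = EF th2 z ^ 8 := by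
  have ha : exp (Real.pi * I / 4) ^ 8 = 1 := by
    rw [← exp_nat_mul, ← exp_two_pi_mul_I]
    congr 1; push_cast; ring
  have : (fun w => th2 (w + 1)) = fun w => exp (Real.pi * I / 4) * th2 w := by
    ext w
    rw [th2, th2, ← mul_assoc, ← exp_add]
    congr 2
    · ring
    · rw [mul_add, exp_add, mul_one, exp_two_pi_mul_I, mul_one]
  rw [← EF_comp_add, this, EF_const_mul _ _ _ ha, mul_pow, ← pow_mul,
    show 6 * 8 = 8 * 6 by norm_num, pow_mul, ha]
  simp

/-- Leading factor of the expansion of `EF θ`. -/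
def Pth (q : ℂ) : ℂ :=
  let c : ℂ := Real.pi * I
  let a := Th q
  let β := c * deriv Th q
  let γ := c ^ 2 * (deriv Th q + q * deriv (deriv Th) q)
  let δ := c ^ 3 * (deriv Th q + 3 * q * deriv (deriv Th) q + q ^ 2 * deriv (deriv (deriv Th)) q)
  (a ^ 2 * δ - 15 * a * q * β * γ + 30 * q ^ 2 * β ^ 3) ^ 2 + 32 * q * (a * γ - 3 * q * β ^ 2) ^ 3
    + (Real.pi : ℂ) ^ 2 * a ^ 10 * (a * γ - 3 * q * β ^ 2) ^ 2

lemma cont_derivs {F : ℂ → ℂ} (hF : DifferentiableOn ℂ F (Metric.ball 0 1)) :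
    ContinuousAt F 0 ∧ ContinuousAt (deriv F) 0 ∧ ContinuousAt (deriv (deriv F)) 0 ∧
      ContinuousAt (deriv (deriv (deriv F))) 0 := by
  have hb : Metric.ball (0 : ℂ) 1 ∈ nhds 0 := Metric.ball_mem_nhds _ one_pos
  have h1 := hF.deriv Metric.isOpen_ball
  have h2 := h1.deriv Metric.isOpen_ball
  have h3 := h2.deriv Metric.isOpen_ball
  exact ⟨(hF.differentiableAt hb).continuousAt, (h1.differentiableAt hb).continuousAt,
    (h2.differentiableAt hb).continuousAt, (h3.differentiableAt hb).continuousAt⟩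

lemma Pth_cont : ContinuousAt Pth 0 := by
  obtain ⟨h0, h1, h2, h3⟩ := cont_derivs Th_diff
  unfold Pth
  fun_prop

lemma Pth_zero : Pth 0 = 0 := by
  simp only [Pth, Th_zero, Th_deriv_zero]
  linear_combination (4 * (Real.pi : ℂ) ^ 6 * I ^ 4) * I_sq

lemma EF_theta {z : ℂ} (hz : z ∈ HH) (q : ℂ) (hq : q = exp (Real.pi * I * z)) :
    EF θ z = q ^ 2 * Pth q := by
  rw [EF_qexp (F := Th) 0 (Real.pi * I) (fun _ => re_pi) Th_diff
    (fun z hz => by rw [theta_eq hz]; simp) hz q 1 hq (by simp), EE, Pth]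
  ring

/-- Leading factor of the expansion of `EF th2`. -/
def Rth (w : ℂ) : ℂ :=
  let b : ℂ := Real.pi * I / 4
  let c : ℂ := 2 * Real.pi * I
  let a := Ps w
  let β := c * deriv Ps w
  let γ := (2 * b * c + c ^ 2) * deriv Ps w + c ^ 2 * w * deriv (deriv Ps) w
  let δ := (3 * b ^ 2 * c + 3 * b * c ^ 2 + c ^ 3) * deriv Ps w
        + (3 * b * c ^ 2 + 3 * c ^ 3) * w * deriv (deriv Ps) w
        + c ^ 3 * w ^ 2 * deriv (deriv (deriv Ps)) w
  let B := a ^ 2 * δ - 15 * a * (b * a * γ + b ^ 2 * a * β + w * β * γ)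
    + 30 * (3 * b ^ 2 * a ^ 2 * β + 3 * b * a * w * β ^ 2 + w ^ 2 * β ^ 3)
  let A := a * γ - 3 * (2 * b * a * β + w * β ^ 2)
  32 * b ^ 3 * a ^ 3 * B + w * B ^ 2 + 32 * (12 * b ^ 4 * a ^ 4 * A - 6 * b ^ 2 * a ^ 2 * w * A ^ 2
    + w ^ 2 * A ^ 3) + (Real.pi : ℂ) ^ 2 * a ^ 10 * (-2 * b ^ 2 * a ^ 2 + w * A) ^ 2

lemma Rth_cont : ContinuousAt Rth 0 := by
  obtain ⟨h0, h1, h2, h3⟩ := cont_derivs Ps_diff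
  unfold Rth
  fun_prop

lemma EF_th2 {z : ℂ} (hz : z ∈ HH) (e : ℂ) (he : e = exp (Real.pi * I / 4 * z)) :
    EF th2 z = e ^ 14 * Rth (e ^ 8) := by
  have hw : e ^ 8 = exp (2 * Real.pi * I * z) := by
    rw [he, ← exp_nat_mul]; congr 1; push_cast; ring
  rw [EF_qexp (f := th2) (F := Ps) (Real.pi * I / 4) (2 * Real.pi * I) (fun _ => re_two_pi) Ps_diff
    (fun z hz => rfl) hz (e ^ 8) e hw he, EE, Rth]
  generalize Ps (e ^ 8) = F0
  generalize deriv Ps (e ^ 8) = F1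
  generalize deriv (deriv Ps) (e ^ 8) = F2
  generalize deriv (deriv (deriv Ps)) (e ^ 8) = F3
  generalize hb : (Real.pi * I / 4 : ℂ) = b
  generalize (2 * Real.pi * I : ℂ) = c
  ring

/-- Product over the cusps. -/
def GG (z : ℂ) : ℂ := EF θ z * EF th4 z * EF th2 z

/-- The expansion of `GG`. -/
def MM (e : ℂ) : ℂ := Pth (e ^ 4) * Pth (-e ^ 4) * Rth (e ^ 8)

lemma MM_tendsto : Filter.Tendsto MM (nhds 0) (nhds 0) := by
  have h1 : ContinuousAt (fun e : ℂ => Pth (e ^ 4)) 0 :=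
    ContinuousAt.comp (g := Pth) (f := fun e : ℂ => e ^ 4) (x := 0) (by simpa using Pth_cont) (by fun_prop)
  have h2 : ContinuousAt (fun e : ℂ => Pth (-e ^ 4)) 0 :=
    ContinuousAt.comp (g := Pth) (f := fun e : ℂ => -e ^ 4) (x := 0) (by simpa using Pth_cont) (by fun_prop)
  have h3 : ContinuousAt (fun e : ℂ => Rth (e ^ 8)) 0 :=
    ContinuousAt.comp (g := Rth) (f := fun e : ℂ => e ^ 8) (x := 0) (by simpa using Rth_cont) (by fun_prop)
  have h : ContinuousAt MM 0 := (h1.mul h2).mul h3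
  have h0 : MM 0 = 0 := by simp [MM, Pth_zero]
  rw [ContinuousAt, h0] at h
  exact h

lemma GG_eq {z : ℂ} (hz : z ∈ HH) (e : ℂ) (he : e = exp (Real.pi * I / 4 * z)) :
    GG z = e ^ 30 * MM e := by
  have h4 : e ^ 4 = exp (Real.pi * I * z) := by
    rw [he, ← exp_nat_mul]; congr 1; push_cast; ring
  have h4' : -e ^ 4 = exp (Real.pi * I * (z + 1)) := by
    rw [mul_add, exp_add, mul_one, exp_pi_mul_I, h4]; ring
  rw [GG, EF_th4, EF_theta hz _ h4, EF_theta (HH_add_one hz) _ h4', EF_th2 hz e he, MM]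
  ring

lemma EF_analytic {f : ℂ → ℂ} (hf : DifferentiableOn ℂ f HH) : DifferentiableOn ℂ (EF f) HH := by
  have h1 := hf.deriv isOpen_HH
  have h2 := h1.deriv isOpen_HH
  have h3 := h2.deriv isOpen_HH
  unfold EF EE
  fun_prop

lemma GG_diff : DifferentiableOn ℂ GG HH :=
  ((EF_analytic theta_diff).mul (EF_analytic th4_diff)).mul (EF_analytic th2_diff)

lemma GG_add (z : ℂ) : GG (z + 1) ^ 8 = GG z ^ 8 := by
  simp only [GG, mul_pow, EF_th2_add, EF_th4_add, ← EF_th4]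
  ring

lemma GG_inv {z : ℂ} (hz : z ∈ HH) : GG (-z⁻¹) ^ 8 = z ^ 360 * GG z ^ 8 := by
  have h0 := HH_ne_zero hz
  simp only [GG, mul_pow, E8_theta hz, E8_th4 hz, E8_th2 hz]
  field_simp

lemma hfun_diff :
    DifferentiableOn ℂ (fun z => GG z ^ 8 / (ModularForm.eta z ^ 24) ^ 30) HH := by
  have he : DifferentiableOn ℂ ModularForm.eta HH := fun z hz =>
    (ModularForm.differentiableAt_eta_of_mem_upperHalfPlaneSet hz).differentiableWithinAt
  have h1 := GG_diff
  refine DifferentiableOn.fun_div (h1.fun_pow 8) ((he.fun_pow 24).fun_pow 30) fun z hz => ?_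
  exact pow_ne_zero _ (pow_ne_zero _ (ModularForm.eta_ne_zero hz))

open UpperHalfPlane ModularForm MatrixGroups in
lemma GG_zero : ∀ z ∈ HH, GG z = 0 := by
  let h : ℍ → ℂ := fun z => GG z ^ 8 / ModularForm.discriminant z ^ 30
  have hS : h ∣[(0 : ℤ)] ModularGroup.S = h := by
    ext z
    have hd := congrFun discriminant_S_invariant z
    rw [SL_slash_apply] at hd ⊢
    have hz0 := z.ne_zero
    have hco : ((ModularGroup.S • z : ℍ) : ℂ) = -(z : ℂ)⁻¹ := by
      rw [modular_S_smul]; simp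
    have hd2 : ModularForm.discriminant (ModularGroup.S • z) =
        (z : ℂ) ^ 12 * ModularForm.discriminant z := by
      rw [← hd, ModularGroup.denom_S]
      have : (z : ℂ) ^ (-12 : ℤ) = ((z : ℂ) ^ 12)⁻¹ := by
        rw [zpow_neg]; norm_cast
      rw [this]
      field_simp
    have hd0 := discriminant_ne_zero z
    simp only [h]
    rw [hco, hd2, GG_inv z.2]
    simp
    field_simp
  have hT : h ∣[(0 : ℤ)] ModularGroup.T = h := by
    ext z
    have hd := congrFun discriminant_T_invariant z
    rw [SL_slash_apply] at hd ⊢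
    have hco : ((ModularGroup.T • z : ℍ) : ℂ) = (z : ℂ) + 1 := by
      rw [modular_T_smul]; simp [add_comm]
    have hd2 : ModularForm.discriminant (ModularGroup.T • z) = ModularForm.discriminant z := by
      have h1 : denom ModularGroup.T z = 1 := by
        rw [ModularGroup.denom_apply]; simp [ModularGroup.T]
      rw [h1, one_zpow, mul_one] at hd
      exact hd
    simp only [h]
    rw [hco, hd2, GG_add]
    simp
  have h0 : IsZeroAtImInfty h := by
    have he : Filter.Tendsto (fun z : ℍ => exp (Real.pi * Complex.I / 4 * z)) atImInfty (nhds 0) := by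
      refine (qParam_tendsto_atImInfty (h := 8) (by norm_num)).congr fun z => ?_
      rw [Function.Periodic.qParam]
      congr 1; push_cast; ring
    have hM := (MM_tendsto.comp he).pow 8
    have hO : (fun z : ℍ => exp (2 * Real.pi * Complex.I * z) / ModularForm.discriminant z)
        =O[atImInfty] (fun _ => (1 : ℝ)) := by
      have h1 : (fun z : ℍ => exp (2 * Real.pi * Complex.I * z)) =O[atImInfty]
          ModularForm.discriminant := by
        refine Asymptotics.IsBigO.trans (Asymptotics.IsBigO.of_norm_le fun z => ?_)
          exp_isBigO_discriminant
        rw [norm_exp]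
        simp
      exact (Asymptotics.div_isBoundedUnder_of_isBigO h1).isBigO_one ℝ
    have hl : (fun z : ℍ => MM (exp (Real.pi * Complex.I / 4 * z)) ^ 8) =o[atImInfty]
        (fun _ => (1 : ℝ)) := by
      rw [Asymptotics.isLittleO_one_iff]
      simpa using hM
    have := (hO.pow 30).mul_isLittleO hl
    simp only [one_pow, mul_one] at this
    rw [Asymptotics.isLittleO_one_iff] at this
    refine this.congr fun z => ?_
    simp only [h]
    rw [GG_eq z.2 _ rfl, div_pow, mul_pow]
    have : exp (2 * Real.pi * Complex.I * z) ^ 30 = (exp (Real.pi * Complex.I / 4 * z) ^ 30) ^ 8 := by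
      rw [← exp_nat_mul, ← exp_nat_mul, ← exp_nat_mul]
      congr 1; push_cast; ring
    rw [this]
    ring
  have hγ : ∀ γ : SL(2, ℤ), h ∣[(0 : ℤ)] γ = h :=
    SlashInvariantForm.slash_action_generators_SL2Z hS hT
  let hh : CuspForm 𝒮ℒ 0 :=
    { toFun := h
      slash_action_eq' := fun A hA => by
        obtain ⟨A, rfl⟩ := hA
        exact hγ A
      holo' := by
        rw [UpperHalfPlane.mdifferentiable_iff]
        refine hfun_diff.congr fun z hz => ?_
        simp [h, ModularForm.discriminant, ofComplex_apply_of_im_pos hz]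
      zero_at_cusps' := fun {c} hc => by
        rw [Subgroup.IsArithmetic.isCusp_iff_isCusp_SL2Z] at hc
        rw [OnePoint.isZeroAt_iff_forall_SL2Z hc]
        intro γ _
        rw [hγ]
        exact h0 }
  obtain ⟨c, hc⟩ := ModularFormClass.levelOne_weight_zero_const hh
  have hc : h = Function.const _ c := hc
  have hc0 : c = 0 := by
    have h1 : Filter.Tendsto h atImInfty (nhds 0) := h0
    rw [hc] at h1
    exact tendsto_nhds_unique tendsto_const_nhds h1
  intro z hz
  have h2 : h ⟨z, hz⟩ = 0 := by rw [hc, hc0]; rfl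
  simp only [h, div_eq_zero_iff] at h2
  rcases h2 with h2 | h2
  · exact eq_zero_of_pow_eq_zero h2
  · exact absurd (eq_zero_of_pow_eq_zero h2) (discriminant_ne_zero _)

lemma EF_theta_zero : ∀ z ∈ HH, EF θ z = 0 := by
  have hc : IsPreconnected HH := (convex_halfSpace_im_gt 0).isPreconnected
  have a3 := (EF_analytic theta_diff).analyticOnNhd isOpen_HH
  have a4 := (EF_analytic th4_diff).analyticOnNhd isOpen_HH
  have a2 := (EF_analytic th2_diff).analyticOnNhd isOpen_HH
  have of4 : (∀ z ∈ HH, EF th4 z = 0) → ∀ z ∈ HH, EF θ z = 0 := fun h z hz => by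
    rw [← EF_th4_add]
    exact h _ (HH_add_one hz)
  rcases (a3.mul a4).eq_zero_or_eq_zero_of_mul_eq_zero a2 GG_zero hc with h | h
  · rcases a3.eq_zero_or_eq_zero_of_mul_eq_zero a4 h hc with h | h
    · exact h
    · exact of4 h
  · refine of4 fun z hz => ?_
    have := E8_th4 hz
    rw [h _ (HH_neg_inv hz)] at this
    simpa using this

/-- The Jacobi theta constant satisfies Jacobi's third-order nonlinear ODE
(derivatives are ordinary derivatives with respect to `τ`). -/
theorem theta_third_order_ODE :
    ∀ τ : ℂ, 0 < τ.im →
      (θ τ ^ 2 * deriv (deriv (deriv θ)) τ - 15 * θ τ * deriv θ τ * deriv (deriv θ) τ +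
          30 * (deriv θ τ) ^ 3) ^ 2 +
        32 * (θ τ * deriv (deriv θ) τ - 3 * (deriv θ τ) ^ 2) ^ 3 +
        (Real.pi : ℂ) ^ 2 * θ τ ^ 10 * (θ τ * deriv (deriv θ) τ - 3 * (deriv θ τ) ^ 2) ^ 2
        = 0 := by
  intro τ hτ
  exact EF_theta_zero τ hτ
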